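/- Let M = ⟨V, ⊞_M, D⟩ be an Nmatrix such that V \ D has at most n elements and ⊢_⊞ ⊆ ⊢_M (every single-conclusion consequence valid for ⊞ holds in M). Then, for distinct variables p₀, …, pₙ, letting Γₙ = {pᵢ ⊞ pⱼ : 0 ≤ i ≠ j ≤ n} and Δₙ = {pᵢ : 0 ≤ i ≤ n}, we have Γₙ ⊩_M Δₙ, whereas Γₙ ⊬_⊞ pᵢ for every 0 ≤ i ≤ n. -/

import Mathlib

/-- Formulas built from countably many propositional variables with a single
binary connective `⊞` (platypus). -/
inductive Fm : Type where
  | var : ℕ → Fm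
  | pl : Fm → Fm → Fm
deriving DecidableEq

namespace Fm

/-- The set of propositional variables occurring in a formula. -/
def vars : Fm → Set ℕ
  | var n => {n}
  | pl a b => vars a ∪ vars b

/-- A `𝔅_⊞`-valuation: a two-valued function such that
`v (φ ⊞ ψ) ∈ {min (v φ) (v ψ), max (v φ) (v ψ)}`. -/
def IsVal (v : Fm → Bool) : Prop :=
  ∀ a b : Fm, v (a.pl b) = (v a && v b) ∨ v (a.pl b) = (v a || v b)

/-- The multiple-conclusion consequence `Γ ⊩_⊞ Δ`. -/
def Mc (Γ Δ : Set Fm) : Prop :=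
  ∀ v : Fm → Bool, IsVal v → (∀ φ ∈ Γ, v φ = true) → ∃ ψ ∈ Δ, v ψ = true

/-- The single-conclusion consequence `Γ ⊢_⊞ φ`. -/
def Sc (Γ : Set Fm) (φ : Fm) : Prop := Mc Γ {φ}

end Fm

namespace Fm

/-- An `M`-valuation for an Nmatrix `⟨V, op, D⟩` with `op : V → V → ℘(V)∖{∅}`. -/
def IsNVal {V : Type} (op : V → V → Set V) (v : Fm → V) : Prop :=
  ∀ a b : Fm, v (a.pl b) ∈ op (v a) (v b)

/-- The multiple-conclusion consequence `Γ ⊩_M Δ` of an Nmatrix. -/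
def NMc {V : Type} (op : V → V → Set V) (D : Set V) (Γ Δ : Set Fm) : Prop :=
  ∀ v : Fm → V, IsNVal op v → (∀ φ ∈ Γ, v φ ∈ D) → ∃ ψ ∈ Δ, v ψ ∈ D

/-- The single-conclusion consequence `Γ ⊢_M φ` of an Nmatrix. -/
def NSc {V : Type} (op : V → V → Set V) (D : Set V) (Γ : Set Fm) (φ : Fm) : Prop :=
  NMc op D Γ {φ}

end Fm

/-!
The only rule of `⊢_⊞` that matters is `p ⊞ p ⊢ p`. If an `M`-valuation gives `φ` and `ψ` the same
value, then whatever value it gives to `φ ⊞ ψ` is also available for `p ⊞ p`, so in an Nmatrix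
obeying the rule `φ ⊞ ψ` is designated only if `φ` is. If no `pᵢ` is designated and the `pᵢ`
outnumber the non-designated values, then by the pigeonhole principle two of them share a value, and
their pair in `Γₙ` cannot be designated. On the two-valued side, the
valuation that refutes exactly the formulas with all their variables among those of `φ` shows that
any `Γ` entailing `φ` contains such a formula, but no `pᵢ ⊞ pⱼ` with `i ≠ j` is of this kind
for `φ = pₖ`.
-/

namespace Fm

theorem sc_pl_self (φ : Fm) : Sc {φ.pl φ} φ := by
  intro v hv hpl
  have hself : v (φ.pl φ) = v φ := by simpa using hv φ φ
  exact ⟨φ, rfl, hself ▸ hpl _ rfl⟩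

open Classical in
theorem isVal_decide_not_vars_subset (S : Set ℕ) : IsVal fun φ => decide (¬φ.vars ⊆ S) := by
  intro a b
  right
  simp only [vars, Set.union_subset_iff, not_and_or, Bool.decide_or]

theorem Sc.exists_vars_subset {Γ : Set Fm} {φ : Fm} (h : Sc Γ φ) :
    ∃ χ ∈ Γ, χ.vars ⊆ φ.vars := by
  classical
  by_contra! hΓ
  obtain ⟨_, rfl, hφ⟩ :=
    h _ (isVal_decide_not_vars_subset φ.vars) fun χ hχ => decide_eq_true (hΓ χ hχ)
  exact of_decide_eq_true hφ Set.Subset.rfl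

/-- The set `{φᵢ ⊞ φⱼ : i ≠ j}` attached to a family of formulas; it is the paper's `Γₙ` when the
family is `p₀, …, pₙ`. -/
def distinctPairs {ι : Type*} (φ : ι → Fm) : Set Fm :=
  {χ | ∃ i j : ι, i ≠ j ∧ χ = (φ i).pl (φ j)}

theorem not_sc_distinctPairs_var {ι : Type*} {p : ι → ℕ} (hp : Function.Injective p) (k : ℕ) :
    ¬Sc (distinctPairs fun i => var (p i)) (var k) := by
  intro h
  obtain ⟨_, ⟨i, j, hij, rfl⟩, hvars⟩ := h.exists_vars_subset
  have hi : p i = k := hvars (Or.inl rfl)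
  have hj : p j = k := hvars (Or.inr rfl)
  exact hij (hp (hi.trans hj.symm))

/-- The map on formulas sending every variable to `φ`, every `p ⊞ q` with `p`, `q` variables to
`φ ⊞ ψ`, and commuting with `⊞` otherwise. It is not a substitution, but precomposing with it turns
an `M`-valuation that identifies `φ` and `ψ` into an `M`-valuation. -/
def splitPairs (φ ψ : Fm) : Fm → Fm
  | var _ => φ
  | pl (var _) (var _) => φ.pl ψ
  | pl a b => (splitPairs φ ψ a).pl (splitPairs φ ψ b)

variable {V : Type} {op : V → V → Set V} {D : Set V}

theorem IsNVal.comp_splitPairs {v : Fm → V} (hv : IsNVal op v) {φ ψ : Fm} (hφψ : v φ = v ψ) :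
    IsNVal op (v ∘ splitPairs φ ψ) := by
  rintro (_ | _) (_ | _)
  case var.var =>
    change v (φ.pl ψ) ∈ op (v φ) (v φ)
    simpa only [hφψ] using hv φ ψ
  all_goals exact hv _ _

theorem IsNVal.mem_of_pl_mem {v : Fm → V} (hv : IsNVal op v) {k : ℕ}
    (hself : NSc op D {(var k).pl (var k)} (var k)) {φ ψ : Fm} (hφψ : v φ = v ψ)
    (hpl : v (φ.pl ψ) ∈ D) : v φ ∈ D := by
  obtain ⟨_, rfl, hφ⟩ := hself _ (hv.comp_splitPairs hφψ) (by rintro _ rfl; exact hpl)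
  exact hφ

theorem nMc_distinctPairs {ι : Type*} (hcard : Dᶜ.encard < ENat.card ι) {k : ℕ}
    (hself : NSc op D {(var k).pl (var k)} (var k)) (φ : ι → Fm) :
    NMc op D (distinctPairs φ) {χ | ∃ i, χ = φ i} := by
  intro v hv hΓ
  by_contra! hΔ
  have hmaps : Set.MapsTo (v ∘ φ) Set.univ Dᶜ := fun i _ => hΔ _ ⟨i, rfl⟩
  rw [← Set.encard_univ] at hcard
  obtain ⟨i, -, j, -, hij, heq⟩ := Set.exists_ne_map_eq_of_encard_lt_of_maps_to hcard hmaps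
  exact hΔ _ ⟨i, rfl⟩ (hv.mem_of_pl_mem hself heq (hΓ _ ⟨i, j, hij, rfl⟩))

end Fm

open Fm in
theorem platypus_saturation_failure_general {ι : Type*} {V : Type}
    {op : V → V → Set V} {D : Set V} (hcard : Dᶜ.encard < ENat.card ι) {k : ℕ}
    (hself : NSc op D {(var k).pl (var k)} (var k)) {p : ι → ℕ} (hp : Function.Injective p) :
    NMc op D (distinctPairs fun i => var (p i)) {χ | ∃ i, χ = var (p i)} ∧
      ∀ i, ¬Sc (distinctPairs fun i => var (p i)) (var (p i)) :=
  ⟨nMc_distinctPairs hcard hself _, fun i => not_sc_distinctPairs_var hp (p i)⟩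

open Fm in
/-- if `M = ⟨V, ⊞_M, D⟩` is an Nmatrix whose set of
non-designated values has at most `n` elements and `⊢_⊞ ⊆ ⊢_M`, then for
distinct variables `p₀, …, pₙ`, taking `Γₙ = {pᵢ ⊞ pⱼ : i ≠ j}` and
`Δₙ = {pᵢ : 0 ≤ i ≤ n}`, we have `Γₙ ⊩_M Δₙ` whereas `Γₙ ⊬_⊞ pᵢ` for all `i`. -/
theorem platypus_saturation_failure (n : ℕ) (V : Type)
    (op : V → V → Set V) (D : Set V)
    (hne : ∀ x y : V, (op x y).Nonempty)
    (hfin : (Dᶜ : Set V).Finite) (hcard : (Dᶜ : Set V).ncard ≤ n)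
    (hsub : ∀ (Γ : Set Fm) (φ : Fm), Sc Γ φ → NSc op D Γ φ)
    (p : Fin (n + 1) → ℕ) (hp : Function.Injective p) :
    NMc op D {φ | ∃ i j : Fin (n + 1), i ≠ j ∧ φ = (Fm.var (p i)).pl (Fm.var (p j))}
      {φ | ∃ i : Fin (n + 1), φ = Fm.var (p i)} ∧
    ∀ i : Fin (n + 1),
      ¬ Sc {φ | ∃ i j : Fin (n + 1), i ≠ j ∧ φ = (Fm.var (p i)).pl (Fm.var (p j))}
        (Fm.var (p i)) := by
  have hlt : Dᶜ.encard < ENat.card (Fin (n + 1)) := by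
    simpa [← hfin.cast_ncard_eq] using mod_cast Nat.lt_succ_of_le hcard
  exact platypus_saturation_failure_general hlt (hsub _ _ (sc_pl_self (var 0))) hp
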